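/- For every α ∈ (0,1), the integral ∫₀^∞ t·F_α(t)/(1+t)³ dt converges absolutely and equals π·α(1−α)/(2 sin(πα)). Equivalently, with λ = sin(πα)/π and the renormalisation parameter μ² = α(1−α)/λ, the deformed measure ρ_λ(t) = t·F_α(t/μ²) satisfies the normalisation condition ∫₀^∞ ρ_λ(t)/(t+μ²)³ dt = 1/2. -/

import Mathlib

open MeasureTheory Real Set

/-- The Gauss hypergeometric function `₂F₁(α, 1-α; 2; -x)` via its Euler integral. -/
noncomputable def Fhyp (α x : ℝ) : ℝ :=
  (1 / (Real.Gamma (1 - α) * Real.Gamma (1 + α))) *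
    ∫ u in (0:ℝ)..1, u ^ (-α) * (1 - u) ^ α * (1 + x * u) ^ (-α)

/-! With `y = xu`, the Euler integral makes `x ^ (c - 1) * ₂F₁(a, b; c; -x)` a multiple of the
Riemann–Liouville integral `∫₀ˣ y ^ (b - 1) * (x - y) ^ (c - b - 1) * (1 + y) ^ (-a) dy`. Multiply
by `(1 + x) ^ (-σ)` and integrate over `x` first, for fixed `y`: the result is
`B(c - b, b + σ - c) * (1 + y) ^ (c - b - σ)`, so the remaining integral over `y` is again a beta
integral of the second kind. For `(a, b, c, σ) = (α, 1 - α, 2, 3)` this yields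
`∫₀^∞ t F_α(t) / (1 + t)³ dt = Γ(1 + α) Γ(2 - α) / 2`, which is `μ² / 2` by the reflection formula;
the substitution `t ↦ t / μ²` then normalises it to `1 / 2`. -/

section BetaIntegral

variable {p q : ℝ}

lemma ofReal_cpow_mul_one_sub_cpow {u : ℝ} (hu : u ∈ Icc (0 : ℝ) 1) (p q : ℝ) :
    (u : ℂ) ^ ((p : ℂ) - 1) * (1 - (u : ℂ)) ^ ((q : ℂ) - 1) =
      ((u ^ (p - 1) * (1 - u) ^ (q - 1) : ℝ) : ℂ) := by
  rw [Complex.ofReal_mul, Complex.ofReal_cpow hu.1, Complex.ofReal_cpow (sub_nonneg.2 hu.2)]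
  push_cast
  rfl

lemma integrableOn_Ioo_rpow_mul_one_sub_rpow (hp : 0 < p) (hq : 0 < q) :
    IntegrableOn (fun u : ℝ => u ^ (p - 1) * (1 - u) ^ (q - 1)) (Ioo 0 1) := by
  have h := (intervalIntegrable_iff_integrableOn_Ioo_of_le zero_le_one).1
    (Complex.betaIntegral_convergent (u := p) (v := q) (by simpa) (by simpa))
  rw [integrableOn_congr_fun (fun u (hu : u ∈ Ioo 0 1) =>
    ofReal_cpow_mul_one_sub_cpow (Ioo_subset_Icc_self hu) p q) measurableSet_Ioo] at h
  exact h.re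

lemma integral_Ioo_rpow_mul_one_sub_rpow (hp : 0 < p) (hq : 0 < q) :
    ∫ u in Ioo (0 : ℝ) 1, u ^ (p - 1) * (1 - u) ^ (q - 1) = ProbabilityTheory.beta p q := by
  rw [ProbabilityTheory.beta_eq_betaIntegralReal p q hp hq, Complex.betaIntegral,
    intervalIntegral.integral_of_le zero_le_one, integral_Ioc_eq_integral_Ioo,
    setIntegral_congr_fun measurableSet_Ioo
      (fun u hu => ofReal_cpow_mul_one_sub_cpow (Ioo_subset_Icc_self hu) p q),
    integral_complex_ofReal, Complex.ofReal_re]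

end BetaIntegral

section BetaIntegralSecondKind

variable {p q s y : ℝ}

lemma image_sub_div_add_Ioi (h : 0 < s + y) :
    (fun x => (x - y) / (s + x)) '' Ioi y = Ioo 0 1 := by
  ext u
  simp only [mem_image, mem_Ioi, mem_Ioo]
  constructor
  · rintro ⟨x, hx, rfl⟩
    have hsx : 0 < s + x := by linarith
    exact ⟨div_pos (sub_pos.2 hx) hsx, (div_lt_one hsx).2 (by linarith)⟩
  · rintro ⟨hu₀, hu₁⟩
    have hu : 0 < 1 - u := sub_pos.2 hu₁
    refine ⟨y + u * (s + y) / (1 - u), by have := div_pos (mul_pos hu₀ h) hu; linarith, ?_⟩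
    rw [show s + (y + u * (s + y) / (1 - u)) = (s + y) / (1 - u) by field_simp; ring]
    field_simp
    ring

lemma injOn_sub_div_add_Ioi (h : 0 < s + y) : InjOn (fun x => (x - y) / (s + x)) (Ioi y) := by
  intro x₁ hx₁ x₂ hx₂ heq
  rw [mem_Ioi] at hx₁ hx₂
  rw [div_eq_div_iff (by linarith) (by linarith)] at heq
  exact mul_left_cancel₀ h.ne' (by linear_combination heq)

lemma hasDerivAt_sub_div_add {x : ℝ} (hx : s + x ≠ 0) :
    HasDerivAt (fun x => (x - y) / (s + x)) ((s + y) / (s + x) ^ 2) x := by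
  refine (((hasDerivAt_id x).sub_const y).div ((hasDerivAt_id x).const_add s) hx).congr_deriv ?_
  simp only [id_eq]
  ring

lemma abs_deriv_smul_rpow_mul_one_sub_rpow {x : ℝ} (h : 0 < s + y) (hx : y < x) :
    |(s + y) / (s + x) ^ 2| •
        (((x - y) / (s + x)) ^ (p - 1) * (1 - (x - y) / (s + x)) ^ (q - 1)) =
      (s + y) ^ q * ((x - y) ^ (p - 1) * (s + x) ^ (-(p + q))) := by
  have hsx : 0 < s + x := by linarith
  have hxy : 0 < x - y := sub_pos.2 hx
  rw [abs_of_pos (by positivity), smul_eq_mul,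
    show 1 - (x - y) / (s + x) = (s + y) / (s + x) by field_simp; ring,
    div_rpow hxy.le hsx.le, div_rpow h.le hsx.le, rpow_sub_one h.ne', rpow_sub_one hsx.ne' p,
    rpow_sub_one hsx.ne' q, rpow_neg hsx.le, rpow_add hsx]
  field_simp

lemma integrableOn_Ioi_sub_rpow_mul_add_rpow (hp : 0 < p) (hq : 0 < q) (h : 0 < s + y) :
    IntegrableOn (fun x => (x - y) ^ (p - 1) * (s + x) ^ (-(p + q))) (Ioi y) := by
  have hint := integrableOn_Ioo_rpow_mul_one_sub_rpow hp hq
  rw [← image_sub_div_add_Ioi h, integrableOn_image_iff_integrableOn_abs_deriv_smul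
      measurableSet_Ioi
      (fun x (hx : y < x) => (hasDerivAt_sub_div_add (by linarith)).hasDerivWithinAt)
      (injOn_sub_div_add_Ioi h),
    integrableOn_congr_fun
      (fun x (hx : x ∈ Ioi y) => abs_deriv_smul_rpow_mul_one_sub_rpow h hx)
      measurableSet_Ioi] at hint
  exact (integrable_const_mul_iff (rpow_pos_of_pos h q).ne'.isUnit _).1 hint

lemma integral_Ioi_sub_rpow_mul_add_rpow (hp : 0 < p) (hq : 0 < q) (h : 0 < s + y) :
    ∫ x in Ioi y, (x - y) ^ (p - 1) * (s + x) ^ (-(p + q)) =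
      (s + y) ^ (-q) * ProbabilityTheory.beta p q := by
  rw [← integral_Ioo_rpow_mul_one_sub_rpow hp hq, ← image_sub_div_add_Ioi h,
    integral_image_eq_integral_abs_deriv_smul measurableSet_Ioi
      (fun x (hx : y < x) => (hasDerivAt_sub_div_add (by linarith)).hasDerivWithinAt)
      (injOn_sub_div_add_Ioi h),
    setIntegral_congr_fun measurableSet_Ioi
      (fun x hx => abs_deriv_smul_rpow_mul_one_sub_rpow h hx),
    integral_const_mul, ← mul_assoc, ← rpow_add h, neg_add_cancel, rpow_zero, one_mul]

lemma integrableOn_Ioi_rpow_mul_one_add_rpow (hp : 0 < p) (hq : 0 < q) :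
    IntegrableOn (fun x : ℝ => x ^ (p - 1) * (1 + x) ^ (-(p + q))) (Ioi 0) := by
  simpa only [sub_zero] using
    integrableOn_Ioi_sub_rpow_mul_add_rpow (s := 1) (y := 0) hp hq (by norm_num)

lemma integral_Ioi_rpow_mul_one_add_rpow (hp : 0 < p) (hq : 0 < q) :
    ∫ x in Ioi (0 : ℝ), x ^ (p - 1) * (1 + x) ^ (-(p + q)) = ProbabilityTheory.beta p q := by
  simpa only [sub_zero, add_zero, one_rpow, one_mul] using
    integral_Ioi_sub_rpow_mul_add_rpow (s := 1) (y := 0) hp hq (by norm_num)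

end BetaIntegralSecondKind

section Wedge

/-- The wedge `a < y < x` in the plane of points `(x, y)`, over which the order of integration is
exchanged. -/
def wedge (a : ℝ) : Set (ℝ × ℝ) :=
  {z | a < z.2 ∧ z.2 < z.1}

variable {E : Type*} [NormedAddCommGroup E] {a : ℝ}

lemma measurableSet_wedge (a : ℝ) : MeasurableSet (wedge a) :=
  (measurableSet_lt measurable_const measurable_snd).inter
    (measurableSet_lt measurable_snd measurable_fst)

lemma indicator_wedge_apply (f : ℝ → ℝ → E) (a x y : ℝ) :
    (wedge a).indicator (Function.uncurry f) (x, y) =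
      (Ioi a).indicator (fun y => (Ioi y).indicator (fun x => f x y) x) y := by
  by_cases hy : a < y <;> by_cases hx : y < x <;> simp [wedge, hy, hx]

lemma integrableOn_wedge_of_nonneg {f : ℝ → ℝ → ℝ} (hf : Measurable (Function.uncurry f))
    (hnonneg : ∀ x y, a < y → y < x → 0 ≤ f x y)
    (hint : ∀ y, a < y → IntegrableOn (fun x => f x y) (Ioi y))
    (hint' : IntegrableOn (fun y => ∫ x in Ioi y, f x y) (Ioi a)) :
    IntegrableOn (Function.uncurry f) (wedge a) := by
  have hS := measurableSet_wedge a
  rw [← integrable_indicator_iff hS, Measure.volume_eq_prod,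
    integrable_prod_iff' (hf.indicator hS).aestronglyMeasurable]
  simp only [indicator_wedge_apply]
  constructor
  · refine .of_forall fun y => ?_
    by_cases hy : a < y
    · simpa [hy, integrable_indicator_iff measurableSet_Ioi] using hint y hy
    · simp [hy]
  · refine (hint'.integrable_indicator measurableSet_Ioi).congr (.of_forall fun y => ?_)
    by_cases hy : a < y
    · simp only [indicator_of_mem (mem_Ioi.2 hy), norm_indicator_eq_indicator_norm]
      rw [integral_indicator measurableSet_Ioi]
      exact setIntegral_congr_fun measurableSet_Ioi fun x hx =>
        (norm_of_nonneg (hnonneg x y hy hx)).symm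
    · simp [hy]

variable [NormedSpace ℝ E]

lemma integral_indicator_wedge (f : ℝ → ℝ → E) (a x : ℝ) :
    ∫ y, (wedge a).indicator (Function.uncurry f) (x, y) = ∫ y in Ioo a x, f x y :=
  integral_indicator (f := f x) measurableSet_Ioo

variable {f : ℝ → ℝ → E}

lemma integrableOn_Ioi_integral_Ioo (hf : IntegrableOn (Function.uncurry f) (wedge a)) :
    IntegrableOn (fun x => ∫ y in Ioo a x, f x y) (Ioi a) := by
  have h := (hf.integrable_indicator (measurableSet_wedge a)).integral_prod_left
  simp only [integral_indicator_wedge] at h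
  exact h.integrableOn

lemma integral_Ioi_integral_Ioo_swap (hf : IntegrableOn (Function.uncurry f) (wedge a)) :
    ∫ x in Ioi a, ∫ y in Ioo a x, f x y = ∫ y in Ioi a, ∫ x in Ioi y, f x y := by
  have h := integral_integral_swap
    (f := fun x y => (wedge a).indicator (Function.uncurry f) (x, y))
    (hf.integrable_indicator (measurableSet_wedge a))
  simp only [integral_indicator_wedge] at h
  rw [setIntegral_eq_integral_of_forall_compl_eq_zero
    (fun x hx => by rw [Ioo_eq_empty hx, setIntegral_empty]), h,
    ← integral_indicator measurableSet_Ioi]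
  congr 1 with y
  simp only [indicator_wedge_apply]
  by_cases hy : a < y
  · simp [hy, integral_indicator measurableSet_Ioi]
  · simp [hy]

end Wedge

section EulerHypergeometric

lemma integral_Ioo_rpow_mul_sub_rpow_mul {x : ℝ} (hx : 0 < x) (p q : ℝ) (g : ℝ → ℝ) :
    ∫ y in Ioo 0 x, y ^ (p - 1) * (x - y) ^ (q - 1) * g y =
      x ^ (p + q - 1) * ∫ u in (0 : ℝ)..1, u ^ (p - 1) * (1 - u) ^ (q - 1) * g (x * u) := by
  have hsubst := intervalIntegral.smul_integral_comp_mul_left (a := 0) (b := 1)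
    (fun y => y ^ (p - 1) * (x - y) ^ (q - 1) * g y) x
  rw [mul_zero, mul_one, smul_eq_mul] at hsubst
  rw [← integral_Ioc_eq_integral_Ioo, ← intervalIntegral.integral_of_le hx.le, ← hsubst,
    ← intervalIntegral.integral_const_mul, ← intervalIntegral.integral_const_mul]
  refine intervalIntegral.integral_congr fun u hu => ?_
  rw [uIcc_of_le zero_le_one] at hu
  have hpow : x * (x ^ (p - 1) * x ^ (q - 1)) = x ^ (p + q - 1) := by
    rw [show p + q - 1 = p - 1 + (q - 1) + 1 by ring, rpow_add_one hx.ne', rpow_add hx, mul_comm]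
  rw [show x - x * u = x * (1 - u) by ring, mul_rpow hx.le hu.1,
    mul_rpow hx.le (sub_nonneg.2 hu.2), ← hpow]
  ring

/-- The Gauss hypergeometric function `₂F₁(a, b; c; -x)` for `0 < b < c` and `0 ≤ x`, encoded by its
Euler integral. -/
noncomputable def eulerHypergeometric (a b c x : ℝ) : ℝ :=
  Gamma c / (Gamma b * Gamma (c - b)) *
    ∫ u in (0 : ℝ)..1, u ^ (b - 1) * (1 - u) ^ (c - b - 1) * (1 + x * u) ^ (-a)

/-- The integrand, on `0 < y < x`, of the double integral for
`∫ x, x ^ (c - 1) * ₂F₁(a, b; c; -x) * (1 + x) ^ (-σ)`, where `y = x * u` for the variable `u` of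
the Euler integral. -/
noncomputable def eulerKernel (a b c σ x y : ℝ) : ℝ :=
  y ^ (b - 1) * (x - y) ^ (c - b - 1) * (1 + y) ^ (-a) * (1 + x) ^ (-σ)

variable {a b c σ x y : ℝ}

lemma integral_eulerKernel_Ioo (a b c σ : ℝ) (hx : 0 < x) :
    Gamma c / (Gamma b * Gamma (c - b)) * ∫ y in Ioo 0 x, eulerKernel a b c σ x y =
      x ^ (c - 1) * eulerHypergeometric a b c x * (1 + x) ^ (-σ) := by
  simp only [eulerKernel, eulerHypergeometric]
  rw [integral_mul_const, integral_Ioo_rpow_mul_sub_rpow_mul hx, add_sub_cancel]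
  ring

lemma measurable_uncurry_eulerKernel (a b c σ : ℝ) :
    Measurable (Function.uncurry (eulerKernel a b c σ)) := by
  unfold Function.uncurry eulerKernel
  fun_prop

lemma eulerKernel_nonneg (hy : 0 < y) (hyx : y < x) : 0 ≤ eulerKernel a b c σ x y := by
  have : 0 < x - y := sub_pos.2 hyx
  have : 0 < x := hy.trans hyx
  unfold eulerKernel
  positivity

lemma eulerKernel_eq_mul (a b c σ x y : ℝ) :
    eulerKernel a b c σ x y = y ^ (b - 1) * (1 + y) ^ (-a) *
      ((x - y) ^ (c - b - 1) * (1 + x) ^ (-(c - b + (b + σ - c)))) := by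
  rw [eulerKernel, show c - b + (b + σ - c) = σ by ring]
  ring

lemma integrableOn_Ioi_eulerKernel (hbc : b < c) (hbσ : c < b + σ) (hy : 0 < y) :
    IntegrableOn (fun x => eulerKernel a b c σ x y) (Ioi y) := by
  simp only [eulerKernel_eq_mul]
  exact (integrableOn_Ioi_sub_rpow_mul_add_rpow (sub_pos.2 hbc) (sub_pos.2 hbσ)
    (by positivity)).const_mul _

lemma integral_Ioi_eulerKernel (hbc : b < c) (hbσ : c < b + σ) (hy : 0 < y) :
    ∫ x in Ioi y, eulerKernel a b c σ x y = ProbabilityTheory.beta (c - b) (b + σ - c) *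
      (y ^ (b - 1) * (1 + y) ^ (-(b + (a + σ - c)))) := by
  simp only [eulerKernel_eq_mul]
  rw [integral_const_mul, integral_Ioi_sub_rpow_mul_add_rpow (sub_pos.2 hbc) (sub_pos.2 hbσ)
    (by positivity), show -(b + (a + σ - c)) = -a + -(b + σ - c) by ring,
    rpow_add (by positivity)]
  ring

lemma integrableOn_wedge_eulerKernel (hb : 0 < b) (hbc : b < c) (haσ : c < a + σ)
    (hbσ : c < b + σ) :
    IntegrableOn (Function.uncurry (eulerKernel a b c σ)) (wedge 0) := by
  refine integrableOn_wedge_of_nonneg (measurable_uncurry_eulerKernel a b c σ)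
    (fun x y => eulerKernel_nonneg) (fun y => integrableOn_Ioi_eulerKernel hbc hbσ) ?_
  rw [integrableOn_congr_fun
    (fun y (hy : y ∈ Ioi 0) => integral_Ioi_eulerKernel hbc hbσ hy) measurableSet_Ioi]
  exact (integrableOn_Ioi_rpow_mul_one_add_rpow hb (sub_pos.2 haσ)).const_mul _

theorem integrableOn_Ioi_rpow_mul_eulerHypergeometric (hb : 0 < b) (hbc : b < c)
    (haσ : c < a + σ) (hbσ : c < b + σ) :
    IntegrableOn (fun x => x ^ (c - 1) * eulerHypergeometric a b c x * (1 + x) ^ (-σ)) (Ioi 0) :=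
  IntegrableOn.congr_fun
    ((integrableOn_Ioi_integral_Ioo
      (integrableOn_wedge_eulerKernel hb hbc haσ hbσ)).const_mul _)
    (fun _ hx => integral_eulerKernel_Ioo a b c σ hx) measurableSet_Ioi

theorem integral_Ioi_rpow_mul_eulerHypergeometric (hb : 0 < b) (hbc : b < c)
    (haσ : c < a + σ) (hbσ : c < b + σ) :
    ∫ x in Ioi 0, x ^ (c - 1) * eulerHypergeometric a b c x * (1 + x) ^ (-σ) =
      Gamma c * Gamma (a + σ - c) * Gamma (b + σ - c) / (Gamma σ * Gamma (a + b + σ - c)) := by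
  rw [← setIntegral_congr_fun measurableSet_Ioi
      (fun x hx => integral_eulerKernel_Ioo a b c σ hx), integral_const_mul,
    integral_Ioi_integral_Ioo_swap (integrableOn_wedge_eulerKernel hb hbc haσ hbσ),
    setIntegral_congr_fun measurableSet_Ioi (fun y hy => integral_Ioi_eulerKernel hbc hbσ hy),
    integral_const_mul, integral_Ioi_rpow_mul_one_add_rpow hb (sub_pos.2 haσ),
    ProbabilityTheory.beta, ProbabilityTheory.beta, show c - b + (b + σ - c) = σ by ring,
    show b + (a + σ - c) = a + b + σ - c by ring]
  have hΓb : Gamma b ≠ 0 := (Gamma_pos_of_pos hb).ne'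
  have hΓcb : Gamma (c - b) ≠ 0 := (Gamma_pos_of_pos (sub_pos.2 hbc)).ne'
  field_simp

end EulerHypergeometric

section Rescaling

variable {m : ℝ}

lemma mul_comp_div_div_add_pow (hm : m ≠ 0) (F : ℝ → ℝ) (n : ℕ) (t : ℝ) :
    t * F (t / m) / (t + m) ^ n =
      m / m ^ n * (m⁻¹ * t * F (m⁻¹ * t) / (1 + m⁻¹ * t) ^ n) := by
  rw [← div_eq_inv_mul, show 1 + t / m = (t + m) / m by field_simp; ring, div_pow]
  field_simp

lemma integrableOn_Ioi_mul_comp_div_div_add_pow {F : ℝ → ℝ} {n : ℕ} (hm : 0 < m)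
    (hF : IntegrableOn (fun t => t * F t / (1 + t) ^ n) (Ioi 0)) :
    IntegrableOn (fun t => t * F (t / m) / (t + m) ^ n) (Ioi 0) := by
  simp only [mul_comp_div_div_add_pow hm.ne']
  rw [← mul_zero m⁻¹] at hF
  exact ((integrableOn_Ioi_comp_mul_left_iff _ 0 (inv_pos.2 hm)).2 hF).const_mul _

lemma integral_Ioi_mul_comp_div_div_add_pow (hm : 0 < m) (F : ℝ → ℝ) (n : ℕ) :
    ∫ t in Ioi 0, t * F (t / m) / (t + m) ^ n =
      m ^ 2 / m ^ n * ∫ t in Ioi 0, t * F t / (1 + t) ^ n := by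
  simp only [mul_comp_div_div_add_pow hm.ne']
  rw [integral_const_mul, integral_comp_mul_left_Ioi (fun t => t * F t / (1 + t) ^ n) 0
    (inv_pos.2 hm), mul_zero, smul_eq_mul, inv_inv]
  ring

end Rescaling

section Fhyp

variable {α : ℝ}

lemma Fhyp_eq_eulerHypergeometric (α : ℝ) : Fhyp α = eulerHypergeometric α (1 - α) 2 := by
  ext x
  rw [Fhyp, eulerHypergeometric, Gamma_two, show (2 : ℝ) - (1 - α) = 1 + α by ring,
    sub_sub_cancel_left, add_sub_cancel_left]

lemma rpow_mul_eulerHypergeometric_eq_mul_Fhyp_div (α : ℝ) {t : ℝ} (ht : 0 < t) :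
    t ^ ((2 : ℝ) - 1) * eulerHypergeometric α (1 - α) 2 t * (1 + t) ^ (-3 : ℝ) =
      t * Fhyp α t / (1 + t) ^ 3 := by
  rw [Fhyp_eq_eulerHypergeometric, rpow_neg (by positivity), ← div_eq_mul_inv]
  norm_num

lemma integrableOn_Ioi_mul_Fhyp_div (hα : α ∈ Ioo (-1 : ℝ) 1) :
    IntegrableOn (fun t => t * Fhyp α t / (1 + t) ^ 3) (Ioi 0) := by
  obtain ⟨hα₁, hα₂⟩ := hα
  exact IntegrableOn.congr_fun
    (integrableOn_Ioi_rpow_mul_eulerHypergeometric (by linarith) (by linarith) (by linarith)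
      (by linarith))
    (fun t ht => rpow_mul_eulerHypergeometric_eq_mul_Fhyp_div α ht) measurableSet_Ioi

lemma integral_Ioi_mul_Fhyp_div (hα : α ∈ Ioo (-1 : ℝ) 1) :
    ∫ t in Ioi (0 : ℝ), t * Fhyp α t / (1 + t) ^ 3 = Gamma (1 + α) * Gamma (2 - α) / 2 := by
  obtain ⟨hα₁, hα₂⟩ := hα
  have hΓ3 : Gamma 3 = 2 := by
    rw [← two_add_one_eq_three, Gamma_add_one two_ne_zero, Gamma_two, mul_one]
  rw [← setIntegral_congr_fun measurableSet_Ioi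
      (fun t ht => rpow_mul_eulerHypergeometric_eq_mul_Fhyp_div α ht),
    integral_Ioi_rpow_mul_eulerHypergeometric (by linarith) (by linarith) (by linarith)
      (by linarith), hΓ3, Gamma_two, show α + 3 - 2 = 1 + α by ring,
    show 1 - α + 3 - 2 = 2 - α by ring, show α + (1 - α) + 3 - 2 = 2 by ring, Gamma_two,
    one_mul, mul_one]

lemma Gamma_one_add_mul_Gamma_two_sub (h₀ : α ≠ 0) (h₁ : α ≠ 1) :
    Gamma (1 + α) * Gamma (2 - α) = π * α * (1 - α) / sin (π * α) := by
  rw [add_comm, Gamma_add_one h₀, show 2 - α = 1 - α + 1 by ring,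
    Gamma_add_one (sub_ne_zero.2 h₁.symm)]
  linear_combination α * (1 - α) * Gamma_mul_Gamma_one_sub α

end Fhyp

theorem normalisation_condition_general (α : ℝ) (hα : α ∈ Ioo (-1 : ℝ) 1) (h₀ : α ≠ 0) :
    (IntegrableOn (fun t => t * Fhyp α t / (1 + t) ^ 3) (Ioi 0) ∧
     ∫ t in Ioi (0 : ℝ), t * Fhyp α t / (1 + t) ^ 3 = π * α * (1 - α) / (2 * sin (π * α))) ∧
    ∀ lam μ2 : ℝ, lam = sin (π * α) / π → μ2 = α * (1 - α) / lam →
      ∀ ρ : ℝ → ℝ, (∀ t, ρ t = t * Fhyp α (t / μ2)) →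
        IntegrableOn (fun t => ρ t / (t + μ2) ^ 3) (Ioi 0) ∧
        ∫ t in Ioi (0 : ℝ), ρ t / (t + μ2) ^ 3 = 1 / 2 := by
  have hint := integrableOn_Ioi_mul_Fhyp_div hα
  have hval := integral_Ioi_mul_Fhyp_div hα
  have hΓ := Gamma_one_add_mul_Gamma_two_sub h₀ hα.2.ne
  refine ⟨⟨hint, by rw [hval, hΓ, div_div, mul_comm 2]⟩, ?_⟩
  rintro lam μ2 rfl hμ2 ρ hρ
  have hμ2Γ : μ2 = Gamma (1 + α) * Gamma (2 - α) := by
    rw [hμ2, hΓ, div_div_eq_mul_div]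
    ring
  have hμ2_pos : 0 < μ2 := hμ2Γ ▸ mul_pos (Gamma_pos_of_pos (by linarith [hα.1]))
    (Gamma_pos_of_pos (by linarith [hα.2]))
  simp only [hρ]
  refine ⟨integrableOn_Ioi_mul_comp_div_div_add_pow hμ2_pos hint, ?_⟩
  rw [integral_Ioi_mul_comp_div_div_add_pow hμ2_pos, hval, ← hμ2Γ]
  field_simp

theorem normalisation_condition (α : ℝ) (hα : α ∈ Set.Ioo (0:ℝ) 1) :
    (IntegrableOn (fun t => t * Fhyp α t / (1 + t)^3) (Set.Ioi 0) ∧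
     ∫ t in Set.Ioi (0:ℝ), t * Fhyp α t / (1 + t)^3 =
       π * α * (1 - α) / (2 * Real.sin (π * α))) ∧
    ∀ lam μ2 : ℝ, lam = Real.sin (π * α) / π → μ2 = α * (1 - α) / lam →
      ∀ ρ : ℝ → ℝ, (∀ t, ρ t = t * Fhyp α (t / μ2)) →
        IntegrableOn (fun t => ρ t / (t + μ2)^3) (Set.Ioi 0) ∧
        ∫ t in Set.Ioi (0:ℝ), ρ t / (t + μ2)^3 = 1/2 :=
  normalisation_condition_general α ⟨by linarith [hα.1], hα.2⟩ hα.1.ne'
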